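/- Let N ≥ 3 be an integer and let K ⊆ ℤ/Nℤ. Suppose K can be partitioned into disjoint clusters K = ⋃_{α∈A} C_α such that for some integer γ with 1 ≤ γ < N/2: (i) every cluster C_α has in-diameter at most γ, and (ii) for all α ≠ α', the cyclic distance d(C_α, C_{α'}) is strictly greater than γ. Then K is not sos-valid; i.e., there is no finite family of functions h_i : ℤ/Nℤ → ℂ, each supported on K, with cos(π/N) − cos((2j+1)π/N) = Σ_i |h_i(j)|² for all j ∈ ℤ/Nℤ. -/

import Mathlib

open Real Finset

/-- The cyclic distance on `ℤ/Nℤ`: `d(a,b) = min{|m| : m ∈ ℤ, m ≡ a − b (mod N)}`. -/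
def cycDist (N : ℕ) (a b : ZMod N) : ℕ := min (a - b).val (b - a).val

/-- `C ⊆ ℤ/Nℤ` has in-diameter at most `γ` if it is contained in an interval
`{x, x+1, …, x+γ}`. -/
def HasInDiamLE (N γ : ℕ) (C : Finset (ZMod N)) : Prop :=
  ∃ x : ZMod N, ∀ c ∈ C, ∃ t : ℕ, t ≤ γ ∧ c = x + (t : ZMod N)

/-- The pure frequency `e_k : ℤ/Nℤ → ℂ`, `e_k(j) = exp(2πi·kj/N)`. -/
noncomputable def freq (N : ℕ) (k j : ZMod N) : ℂ :=
  Complex.exp (2 * Real.pi * Complex.I * (k.val : ℂ) * (j.val : ℂ) / N)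

/-- `h : ℤ/Nℤ → ℂ` is supported on `K` if it is a `ℂ`-linear combination of the
pure frequencies `e_k`, `k ∈ K`. -/
def SupportedOn (N : ℕ) (K : Finset (ZMod N)) (h : ZMod N → ℂ) : Prop :=
  ∃ c : ZMod N → ℂ, h = fun j => ∑ k ∈ K, c k * freq N k j

/-- `K ⊆ ℤ/Nℤ` is sos-valid if the facet function `cos(π/N) − cos((2j+1)π/N)` of the
regular `N`-gon is a finite sum of squared moduli of functions supported on `K`. -/
def SosValid (N : ℕ) (K : Finset (ZMod N)) : Prop :=
  ∃ (m : ℕ) (h : Fin m → ZMod N → ℂ), (∀ i, SupportedOn N K (h i)) ∧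
    ∀ j : ZMod N,
      Real.cos (π / N) - Real.cos ((2 * (j.val : ℝ) + 1) * π / N) =
        ∑ i, Complex.normSq (h i j)

/-!
A function on `ℤ/Nℤ` whose frequencies have representatives `|n| ≤ γ < N/2` extends canonically to
a trigonometric polynomial in a real variable `s`; for an arbitrary function, discard the other
frequencies first. When `f` is supported on a cluster of in-diameter at most `γ`, the extension of
`|f|²` is again a squared modulus. When `f` and `g` are supported on clusters farther than `γ`
apart, all frequencies of `f * star g` are discarded. So if `h` is supported on a union of such
clusters, the extension of `|h|²` is nonnegative on the whole real line. The facet function has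
frequencies `0, ±1` only, and its extension is negative at `s = -1/2`, the midpoint of the two
adjacent vertices where it vanishes.
-/

open scoped ComplexOrder

/-- The facet function of the regular `N`-gon extended from `j ∈ ℤ/Nℤ` to a real variable. -/
noncomputable def facetFn (N : ℕ) (s : ℝ) : ℝ :=
  cos (π / N) - cos ((2 * s + 1) * π / N)

lemma facetFn_neg_half_neg {N : ℕ} (hN : N ≠ 0) : facetFn N (-1 / 2) < 0 := by
  have hN1 : (1 : ℝ) ≤ N := by exact_mod_cast Nat.one_le_iff_ne_zero.2 hN
  have hcos : cos (π / N) < cos 0 :=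
    cos_lt_cos_of_nonneg_of_le_pi le_rfl (div_le_self pi_pos.le hN1) (by positivity)
  have hangle : (2 * (-1 / 2) + 1) * π / N = 0 := by ring
  rw [facetFn, hangle]
  exact sub_neg.2 hcos

/-- The function `s ↦ exp(2πi·ns/N)` of a real variable. It extends the pure frequency `e_n`, but
depends on the integer `n` itself and not only on `n` modulo `N`. -/
noncomputable def realFreq (N : ℕ) (n : ℤ) (s : ℝ) : ℂ :=
  Complex.exp (2 * π * Complex.I * n * s / N)

lemma realFreq_zero (N : ℕ) (s : ℝ) : realFreq N 0 s = 1 := by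
  simp [realFreq]

lemma realFreq_sub (N : ℕ) (m n : ℤ) (s : ℝ) :
    realFreq N (m - n) s = realFreq N m s * star (realFreq N n s) := by
  simp only [realFreq, Complex.star_def, ← Complex.exp_conj, ← Complex.exp_add]
  congr 1
  simp only [map_mul, map_div₀, map_intCast, map_natCast, map_ofNat, Complex.conj_ofReal,
    Complex.conj_I, Int.cast_sub]
  ring

lemma ofReal_cos_eq_realFreq_add (N : ℕ) (n : ℤ) (s φ : ℝ) :
    (cos (2 * π * n * s / N + φ) : ℂ) =
      Complex.exp (φ * Complex.I) / 2 * realFreq N n s +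
        Complex.exp (-(φ * Complex.I)) / 2 * realFreq N (-n) s := by
  simp only [realFreq, Complex.ofReal_cos, Complex.cos, div_mul_eq_mul_div, ← Complex.exp_add,
    ← add_div]
  push_cast
  congr 3 <;> ring

lemma freq_zero (N : ℕ) : freq N 0 = 1 := by
  ext j
  simp [freq]

lemma supportedOn_iff_exists_sum_smul {N : ℕ} {K : Finset (ZMod N)} {h : ZMod N → ℂ} :
    SupportedOn N K h ↔ ∃ c : ZMod N → ℂ, h = ∑ k ∈ K, c k • freq N k := by
  simp only [SupportedOn, funext_iff, Finset.sum_apply, Pi.smul_apply, smul_eq_mul]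

lemma SupportedOn.exists_eq_sum_of_biUnion {N : ℕ} {ι : Type*} {I : Finset ι}
    {C : ι → Finset (ZMod N)} (hdisj : (I : Set ι).PairwiseDisjoint C) {h : ZMod N → ℂ}
    (hh : SupportedOn N (I.biUnion C) h) :
    ∃ f : ι → ZMod N → ℂ, (∀ i, SupportedOn N (C i) (f i)) ∧ h = ∑ i ∈ I, f i := by
  obtain ⟨c, rfl⟩ := supportedOn_iff_exists_sum_smul.1 hh
  exact ⟨fun i => ∑ k ∈ C i, c k • freq N k, fun _ => supportedOn_iff_exists_sum_smul.2 ⟨c, rfl⟩,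
    sum_biUnion hdisj⟩

section BandExtension

variable {N : ℕ} [NeZero N]

lemma cycDist_eq_natAbs_valMinAbs (a b : ZMod N) :
    cycDist N a b = (a - b).valMinAbs.natAbs := by
  rw [cycDist, ZMod.valMinAbs_natAbs_eq_min, ← neg_sub a b, ZMod.neg_val]
  split_ifs with hab
  · simp [hab]
  · rfl

lemma freq_eq_stdAddChar (k j : ZMod N) : freq N k j = ZMod.stdAddChar (k * j) := by
  have hcast : k * j = ((k.val * j.val : ℤ) : ZMod N) := by simp
  rw [hcast, ZMod.stdAddChar_coe, freq]
  push_cast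
  congr 1
  ring

lemma freq_intCast (n : ℤ) (j : ZMod N) : freq N n j = realFreq N n j.val := by
  have hcast : (n : ZMod N) * j = ((n * j.val : ℤ) : ZMod N) := by simp
  rw [freq_eq_stdAddChar, hcast, ZMod.stdAddChar_coe, realFreq]
  push_cast
  congr 1
  ring

lemma freq_mul_star_freq (k l : ZMod N) : freq N k * star (freq N l) = freq N (k - l) := by
  ext j
  simp only [Pi.mul_apply, Pi.star_apply, freq_eq_stdAddChar, Complex.star_def,
    ← AddChar.map_neg_eq_conj, ← AddChar.map_add_eq_mul, ← sub_eq_add_neg, ← sub_mul]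

lemma dft_freq (k d : ZMod N) : ZMod.dft (freq N k) d = if k = d then (N : ℂ) else 0 := by
  have horth := AddChar.sum_mulShift (k - d) (ZMod.isPrimitive_stdAddChar N)
  simp only [ZMod.card, sub_eq_zero, Nat.cast_ite, Nat.cast_zero] at horth
  rw [ZMod.dft_apply, ← horth]
  refine sum_congr rfl fun j _ => ?_
  rw [freq_eq_stdAddChar, smul_eq_mul, ← AddChar.map_add_eq_mul]
  congr 1
  ring

/-- The linear functional taking `F : ℤ/Nℤ → ℂ` to the value at the real point `s` of the
trigonometric polynomial obtained from the Fourier expansion of `F` by discarding the frequencies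
whose representative `n` of least absolute value has `|n| > γ` and replacing each other frequency
by `realFreq N n`. -/
noncomputable def bandExtension (N γ : ℕ) [NeZero N] (s : ℝ) : (ZMod N → ℂ) →ₗ[ℂ] ℂ :=
  ∑ d : ZMod N with d.valMinAbs.natAbs ≤ γ,
    ((N : ℂ)⁻¹ * realFreq N d.valMinAbs s) • (LinearMap.proj d ∘ₗ ZMod.dft.toLinearMap)

lemma bandExtension_freq (γ : ℕ) (s : ℝ) (k : ZMod N) :
    bandExtension N γ s (freq N k) =
      if k.valMinAbs.natAbs ≤ γ then realFreq N k.valMinAbs s else 0 := by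
  have hN : (N : ℂ) ≠ 0 := NeZero.ne _
  simp [bandExtension, dft_freq, mul_right_comm, hN]

lemma bandExtension_freq_intCast {γ : ℕ} (hγ : 2 * γ < N) (s : ℝ) {n : ℤ} (hn : n.natAbs ≤ γ) :
    bandExtension N γ s (freq N n) = realFreq N n s := by
  have hval : (n : ZMod N).valMinAbs = n := by
    rw [ZMod.valMinAbs_spec]
    exact ⟨rfl, by constructor <;> omega⟩
  rw [bandExtension_freq, hval, if_pos hn]

lemma bandExtension_one (γ : ℕ) (s : ℝ) : bandExtension N γ s 1 = 1 := by
  rw [← freq_zero, bandExtension_freq, ZMod.valMinAbs_zero, if_pos (by simp), realFreq_zero]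

lemma bandExtension_cos {γ : ℕ} (hγ : 2 * γ < N) (s φ : ℝ) {n : ℤ} (hn : n.natAbs ≤ γ) :
    bandExtension N γ s (fun j => (cos (2 * π * n * j.val / N + φ) : ℂ)) =
      cos (2 * π * n * s / N + φ) := by
  have hF : (fun j : ZMod N => (cos (2 * π * n * j.val / N + φ) : ℂ)) =
      (Complex.exp (φ * Complex.I) / 2) • freq N n +
        (Complex.exp (-(φ * Complex.I)) / 2) • freq N ((-n : ℤ) : ZMod N) := by
    ext j
    simp only [Pi.add_apply, Pi.smul_apply, freq_intCast, smul_eq_mul, ofReal_cos_eq_realFreq_add]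
  rw [hF, map_add, map_smul, map_smul, bandExtension_freq_intCast hγ s hn,
    bandExtension_freq_intCast hγ s (by rwa [Int.natAbs_neg]), ofReal_cos_eq_realFreq_add,
    smul_eq_mul, smul_eq_mul]

lemma bandExtension_facetFn {γ : ℕ} (hγ1 : 1 ≤ γ) (hγ2 : 2 * γ < N) (s : ℝ) :
    bandExtension N γ s (fun j => (facetFn N j.val : ℂ)) = facetFn N s := by
  have hfacet (t : ℝ) : (facetFn N t : ℂ) =
      cos (π / N) - cos (2 * π * (1 : ℤ) * t / N + π / N) := by
    rw [facetFn, Complex.ofReal_sub, Int.cast_one]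
    congr 3
    ring
  have hF : (fun j : ZMod N => (facetFn N j.val : ℂ)) =
      (cos (π / N) : ℂ) • 1 -
        fun j : ZMod N => (cos (2 * π * (1 : ℤ) * j.val / N + π / N) : ℂ) := by
    ext j
    simp only [hfacet, Pi.sub_apply, Pi.smul_apply, Pi.one_apply, smul_eq_mul, mul_one]
  rw [hF, map_sub, map_smul, bandExtension_one, bandExtension_cos hγ2 s _ (by simpa using hγ1),
    hfacet, smul_eq_mul, mul_one]

lemma bandExtension_sum_smul_mul_star (γ : ℕ) (s : ℝ) (A B : Finset (ZMod N)) (a b : ZMod N → ℂ) :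
    bandExtension N γ s ((∑ k ∈ A, a k • freq N k) * star (∑ l ∈ B, b l • freq N l)) =
      ∑ k ∈ A, ∑ l ∈ B, a k * star (b l) * bandExtension N γ s (freq N (k - l)) := by
  simp only [star_sum, star_smul, sum_mul_sum, smul_mul_smul_comm, freq_mul_star_freq, map_sum,
    map_smul, smul_eq_mul]

lemma bandExtension_mul_star_eq_zero {γ : ℕ} (s : ℝ) {A B : Finset (ZMod N)}
    (hsep : ∀ k ∈ A, ∀ l ∈ B, γ < cycDist N k l) {f g : ZMod N → ℂ}
    (hf : SupportedOn N A f) (hg : SupportedOn N B g) :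
    bandExtension N γ s (f * star g) = 0 := by
  obtain ⟨a, rfl⟩ := supportedOn_iff_exists_sum_smul.1 hf
  obtain ⟨b, rfl⟩ := supportedOn_iff_exists_sum_smul.1 hg
  rw [bandExtension_sum_smul_mul_star]
  refine sum_eq_zero fun k hk => sum_eq_zero fun l hl => ?_
  have hfar : ¬ (k - l).valMinAbs.natAbs ≤ γ := by
    rw [← cycDist_eq_natAbs_valMinAbs, not_le]
    exact hsep k hk l hl
  rw [bandExtension_freq, if_neg hfar, mul_zero]

lemma bandExtension_mul_star_self_nonneg {γ : ℕ} (hγ : 2 * γ < N) (s : ℝ) {C : Finset (ZMod N)}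
    (hC : HasInDiamLE N γ C) {f : ZMod N → ℂ} (hf : SupportedOn N C f) :
    0 ≤ bandExtension N γ s (f * star f) := by
  obtain ⟨c, rfl⟩ := supportedOn_iff_exists_sum_smul.1 hf
  obtain ⟨x, hx⟩ := hC
  choose! t ht hxt using hx
  have hfreq : ∀ k ∈ C, ∀ l ∈ C, bandExtension N γ s (freq N (k - l)) =
      realFreq N (t k) s * star (realFreq N (t l) s) := by
    intro k hk l hl
    have hkl : k - l = ((t k - t l : ℤ) : ZMod N) := by
      conv_lhs => rw [hxt k hk, hxt l hl]
      push_cast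
      ring
    have hbound : ((t k : ℤ) - t l).natAbs ≤ γ := by
      have := ht k hk
      have := ht l hl
      omega
    rw [hkl, bandExtension_freq_intCast hγ s hbound, realFreq_sub]
  have hsq : bandExtension N γ s ((∑ k ∈ C, c k • freq N k) * star (∑ k ∈ C, c k • freq N k)) =
      (∑ k ∈ C, c k * realFreq N (t k) s) * star (∑ k ∈ C, c k * realFreq N (t k) s) := by
    rw [bandExtension_sum_smul_mul_star, star_sum, sum_mul_sum]
    refine sum_congr rfl fun k hk => sum_congr rfl fun l hl => ?_
    rw [hfreq k hk l hl, star_mul']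
    ring
  rw [hsq]
  exact mul_star_self_nonneg _

lemma bandExtension_sum_mul_star_self_nonneg {γ : ℕ} (hγ : 2 * γ < N) (s : ℝ) {ι : Type*}
    {I : Finset ι} {C : ι → Finset (ZMod N)} (hdiam : ∀ i ∈ I, HasInDiamLE N γ (C i))
    (hsep : ∀ i ∈ I, ∀ j ∈ I, i ≠ j → ∀ k ∈ C i, ∀ l ∈ C j, γ < cycDist N k l)
    {f : ι → ZMod N → ℂ} (hf : ∀ i ∈ I, SupportedOn N (C i) (f i)) :
    0 ≤ bandExtension N γ s ((∑ i ∈ I, f i) * star (∑ i ∈ I, f i)) := by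
  have hdiag : bandExtension N γ s ((∑ i ∈ I, f i) * star (∑ i ∈ I, f i)) =
      ∑ i ∈ I, bandExtension N γ s (f i * star (f i)) := by
    rw [star_sum, sum_mul_sum, map_sum]
    refine sum_congr rfl fun i hi => ?_
    rw [map_sum]
    refine sum_eq_single_of_mem i hi fun j hj hne => ?_
    exact bandExtension_mul_star_eq_zero s (hsep i hi j hj hne.symm) (hf i hi) (hf j hj)
  rw [hdiag]
  exact sum_nonneg fun i hi => bandExtension_mul_star_self_nonneg hγ s (hdiam i hi) (hf i hi)

end BandExtension

/-- If `K ⊆ ℤ/Nℤ` can be partitioned into clusters of in-diameter at most `γ` that are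
pairwise at cyclic distance greater than `γ` (for some `1 ≤ γ < N/2`), then `K` is not
sos-valid. -/
theorem clustering_not_sosValid (N : ℕ) (hN : 3 ≤ N) (K : Finset (ZMod N))
    (γ : ℕ) (hγ1 : 1 ≤ γ) (hγ2 : 2 * γ < N)
    (P : Finset (Finset (ZMod N)))
    (hcover : K = P.biUnion id)
    (hdisj : ∀ C ∈ P, ∀ C' ∈ P, C ≠ C' → Disjoint C C')
    (hdiam : ∀ C ∈ P, HasInDiamLE N γ C)
    (hsep : ∀ C ∈ P, ∀ C' ∈ P, C ≠ C' → ∀ k ∈ C, ∀ k' ∈ C', γ < cycDist N k k') :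
    ¬ SosValid N K := by
  have : NeZero N := ⟨by omega⟩
  rintro ⟨m, h, hsupp, hfacet⟩
  have hsos : (fun j : ZMod N => (facetFn N j.val : ℂ)) = ∑ i, h i * star (h i) := by
    ext j
    simp only [facetFn, hfacet, Complex.ofReal_sum, Finset.sum_apply, Pi.mul_apply, Pi.star_apply,
      Complex.star_def, Complex.mul_conj]
  have hnonneg : 0 ≤ bandExtension N γ (-1 / 2) (∑ i, h i * star (h i)) := by
    rw [map_sum]
    refine sum_nonneg fun i _ => ?_
    obtain ⟨f, hf, hhf⟩ := (hcover ▸ hsupp i).exists_eq_sum_of_biUnion hdisj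
    rw [hhf]
    exact bandExtension_sum_mul_star_self_nonneg hγ2 _ hdiam hsep fun C _ => hf C
  rw [← hsos, bandExtension_facetFn hγ1 hγ2, Complex.zero_le_real] at hnonneg
  exact (facetFn_neg_half_neg (NeZero.ne N)).not_ge hnonneg
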